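/- Let G be a finite simple graph, let [U_0, U_1, …, U_q] (q ≥ 1) and [V_0, V_1, …, V_p] (p ≥ 1) be separations of G with U_0 ⊆ V_0, and suppose that every V_i with 1 ≤ i ≤ p is contained in some U_j with 1 ≤ j ≤ q. For each j with 1 ≤ j ≤ q, let W_j be the set of vertices of the subgraph G(U_j) that do not belong to any V_i with 1 ≤ i ≤ p and V_i ⊆ U_j. Then for each j, W_j = (V_0 ∩ U_j) ∪ Nbr_G(U_j), so |W_j| = |V_0 ∩ U_j| + nbr_G(U_j), and moreover Σ_{j=1}^q |W_j| ≤ |V_0| + Σ_{j=1}^q nbr_G(U_j). -/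

import Mathlib

/-!
Since the blocks `U j` are pairwise disjoint, each `V i` with `1 ≤ i` is contained in `U j` or
disjoint from it. So removing from `U j` the blocks `V i` contained in it amounts to removing all
of them, which leaves `V 0 ∩ U j`; on the other hand `Nbr G (U j)` lies outside `U j` and loses
nothing. The bound follows because the sets `V 0 ∩ U j` are disjoint subsets of `V 0`.
-/

/-- `Nbr G V`: vertices outside `V` adjacent in `G` to some vertex of `V`. -/
def Nbr {α : Type*} (G : SimpleGraph α) (V : Set α) : Set α :=
  {v | v ∉ V ∧ ∃ u ∈ V, G.Adj u v}

section

variable {α ι κ : Type*}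

theorem disjoint_Nbr (G : SimpleGraph α) (A : Set α) : Disjoint A (Nbr G A) :=
  Set.disjoint_left.mpr fun _ hvA hvN => hvN.1 hvA

theorem sum_encard_inter_le {s : Finset ι} {U : ι → Set α}
    (hU : (s : Set ι).PairwiseDisjoint U) (T : Set α) :
    ∑ j ∈ s, (T ∩ U j).encard ≤ T.encard := by
  have hTU : (s : Set ι).PairwiseDisjoint fun j => T ∩ U j :=
    hU.mono fun _ => Set.inter_subset_right
  rw [← finsum_mem_coe_finset, ← s.finite_toSet.encard_biUnion hTU]
  exact Set.encard_le_encard (Set.iUnion₂_subset fun _ _ => Set.inter_subset_left)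

theorem subset_or_disjoint_of_pairwiseDisjoint {s : Set ι} {U : ι → Set α}
    (hU : s.PairwiseDisjoint U) {B : Set α} (hB : ∃ k ∈ s, B ⊆ U k) {j : ι} (hj : j ∈ s) :
    B ⊆ U j ∨ Disjoint (U j) B := by
  obtain ⟨k, hk, hBk⟩ := hB
  obtain rfl | hjk := eq_or_ne j k
  · exact .inl hBk
  · exact .inr ((hU hj hk hjk).mono_right hBk)

theorem sdiff_biUnion_subset_of_disjoint {A N : Set α} (hAN : Disjoint A N)
    (V : κ → Set α) (t : Set κ) :
    N \ ⋃ i ∈ {i | i ∈ t ∧ V i ⊆ A}, V i = N :=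
  sdiff_eq_left.mpr (hAN.mono_left (Set.iUnion₂_subset fun _ hi => hi.2)).symm

theorem sdiff_biUnion_subset_eq_sdiff_biUnion {A : Set α} {V : κ → Set α} {t : Set κ}
    (hA : ∀ i ∈ t, V i ⊆ A ∨ Disjoint A (V i)) :
    A \ ⋃ i ∈ {i | i ∈ t ∧ V i ⊆ A}, V i = A \ ⋃ i ∈ t, V i := by
  refine Set.Subset.antisymm (fun v ⟨hvA, hv⟩ => ⟨hvA, fun hvt => hv ?_⟩)
    (Set.sdiff_subset_sdiff_right (Set.biUnion_subset_biUnion_left fun _ hi => hi.1))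
  obtain ⟨i, hi, hvi⟩ := Set.mem_iUnion₂.mp hvt
  have hVA : V i ⊆ A :=
    (hA i hi).resolve_right fun hdisj => Set.disjoint_left.mp hdisj hvA hvi
  exact Set.mem_biUnion ⟨hi, hVA⟩ hvi

theorem union_Nbr_sdiff_biUnion_subset (G : SimpleGraph α) {A V₀ : Set α} {V : κ → Set α}
    {t : Set κ} (hV : IsCompl V₀ (⋃ i ∈ t, V i)) (hA : ∀ i ∈ t, V i ⊆ A ∨ Disjoint A (V i)) :
    (A ∪ Nbr G A) \ ⋃ i ∈ {i | i ∈ t ∧ V i ⊆ A}, V i = V₀ ∩ A ∪ Nbr G A := by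
  rw [Set.union_sdiff_distrib, sdiff_biUnion_subset_eq_sdiff_biUnion hA,
    sdiff_biUnion_subset_of_disjoint (disjoint_Nbr G A), Set.sdiff_eq_compl_inter,
    hV.symm.compl_eq]

theorem encard_inter_union_Nbr (G : SimpleGraph α) (T A : Set α) :
    (T ∩ A ∪ Nbr G A).encard = (T ∩ A).encard + (Nbr G A).encard :=
  Set.encard_union_eq ((disjoint_Nbr G A).mono_left Set.inter_subset_right)

theorem isCompl_biUnion_Icc_one {V : ℕ → Set α} {p : ℕ}
    (hdisj : ∀ i ∈ Set.Icc 1 p, Disjoint (V 0) (V i)) (hcover : ∀ v, ∃ i, i ≤ p ∧ v ∈ V i) :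
    IsCompl (V 0) (⋃ i ∈ Set.Icc 1 p, V i) := by
  refine ⟨Set.disjoint_iUnion₂_right.mpr hdisj, codisjoint_iff_le_sup.mpr fun v _ => ?_⟩
  obtain ⟨i, hip, hvi⟩ := hcover v
  obtain rfl | hi := i.eq_zero_or_pos
  · exact .inl hvi
  · exact .inr (Set.mem_biUnion ⟨hi, hip⟩ hvi)

theorem boundary_vertices_of_refinement_general (G : SimpleGraph α) {s : Finset ι}
    {U : ι → Set α} (hU : (s : Set ι).PairwiseDisjoint U) {V₀ : Set α} {t : Set κ}
    {V : κ → Set α} (hV : IsCompl V₀ (⋃ i ∈ t, V i)) (href : ∀ i ∈ t, ∃ j ∈ s, V i ⊆ U j)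
    {W : ι → Set α}
    (hW : ∀ j ∈ s, W j = (U j ∪ Nbr G (U j)) \ ⋃ i ∈ {i | i ∈ t ∧ V i ⊆ U j}, V i) :
    (∀ j ∈ s, W j = V₀ ∩ U j ∪ Nbr G (U j) ∧
      (W j).encard = (V₀ ∩ U j).encard + (Nbr G (U j)).encard) ∧
    ∑ j ∈ s, (W j).encard ≤ V₀.encard + ∑ j ∈ s, (Nbr G (U j)).encard := by
  have hW_eq : ∀ j ∈ s, W j = V₀ ∩ U j ∪ Nbr G (U j) := fun j hj =>
    (hW j hj).trans <| union_Nbr_sdiff_biUnion_subset G hV fun i hi =>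
      subset_or_disjoint_of_pairwiseDisjoint hU (href i hi) hj
  have hW_encard : ∀ j ∈ s, (W j).encard = (V₀ ∩ U j).encard + (Nbr G (U j)).encard :=
    fun j hj => by rw [hW_eq j hj, encard_inter_union_Nbr]
  refine ⟨fun j hj => ⟨hW_eq j hj, hW_encard j hj⟩, ?_⟩
  rw [Finset.sum_congr rfl hW_encard, Finset.sum_add_distrib]
  gcongr
  exact sum_encard_inter_le hU V₀

end

/-- Let `[U 0, …, U q]` and `[V 0, …, V p]` be separations of a finite simple
graph `G` with `U 0 ⊆ V 0`, where each `V i` (`1 ≤ i ≤ p`) is contained in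
some `U j` (`1 ≤ j ≤ q`).  For `1 ≤ j ≤ q` let `W j` consist of the vertices
of `G(U j)` lying in no `V i` with `1 ≤ i ≤ p` and `V i ⊆ U j`.  Then
`W j = (V 0 ∩ U j) ∪ Nbr G (U j)`, hence
`|W j| = |V 0 ∩ U j| + nbr_G(U j)`, and
`Σ_{j=1}^q |W j| ≤ |V 0| + Σ_{j=1}^q nbr_G(U j)`. -/
theorem boundary_vertices_of_refinement {α : Type*} [Fintype α] (G : SimpleGraph α)
    (q p : ℕ) (U V : ℕ → Set α) (hq : 1 ≤ q) (hp : 1 ≤ p)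
    (hUdisj : ∀ j j', j ≤ q → j' ≤ q → j ≠ j' → Disjoint (U j) (U j'))
    (hUcover : ∀ v, ∃ j, j ≤ q ∧ v ∈ U j)
    (hUsep : ∀ j j', 1 ≤ j → j ≤ q → 1 ≤ j' → j' ≤ q → j ≠ j' →
      ∀ u ∈ U j, ∀ w ∈ U j', ¬ G.Adj u w)
    (hVdisj : ∀ i i', i ≤ p → i' ≤ p → i ≠ i' → Disjoint (V i) (V i'))
    (hVcover : ∀ v, ∃ i, i ≤ p ∧ v ∈ V i)
    (hVsep : ∀ i i', 1 ≤ i → i ≤ p → 1 ≤ i' → i' ≤ p → i ≠ i' →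
      ∀ u ∈ V i, ∀ w ∈ V i', ¬ G.Adj u w)
    (hU0V0 : U 0 ⊆ V 0)
    (href : ∀ i, 1 ≤ i → i ≤ p → ∃ j, 1 ≤ j ∧ j ≤ q ∧ V i ⊆ U j)
    (W : ℕ → Set α)
    (hW : ∀ j, 1 ≤ j → j ≤ q →
      W j = (U j ∪ Nbr G (U j)) \ ⋃ i ∈ {i : ℕ | 1 ≤ i ∧ i ≤ p ∧ V i ⊆ U j}, V i) :
    (∀ j, 1 ≤ j → j ≤ q →
        W j = (V 0 ∩ U j) ∪ Nbr G (U j) ∧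
        (W j).ncard = (V 0 ∩ U j).ncard + (Nbr G (U j)).ncard) ∧
    ∑ j ∈ Finset.Icc 1 q, (W j).ncard
      ≤ (V 0).ncard + ∑ j ∈ Finset.Icc 1 q, (Nbr G (U j)).ncard := by
  have hU : (Finset.Icc 1 q : Set ℕ).PairwiseDisjoint U := fun j hj k hk =>
    hUdisj j k (Finset.mem_Icc.mp hj).2 (Finset.mem_Icc.mp hk).2
  have hV : IsCompl (V 0) (⋃ i ∈ Set.Icc 1 p, V i) :=
    isCompl_biUnion_Icc_one (fun i hi => hVdisj 0 i p.zero_le hi.2 (Nat.ne_of_lt hi.1)) hVcover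
  have main := boundary_vertices_of_refinement_general G hU hV (W := W)
    (by simpa [and_assoc] using href) (by simpa [and_assoc] using hW)
  simp only [← (Set.toFinite _).cast_ncard_eq, Finset.mem_Icc, and_imp] at main
  exact_mod_cast main
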